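/- Let n ≥ 2 and X ∈ GL_n(ℂ), and suppose the recursively defined sequence Y_0 = X, Y_{k+1} = X·𝛄(B_k) is defined for all k ≥ 0, i.e. each Y_k admits a factorization Y_k = B_k C_k with B_k unipotent upper-triangular and C_k invertible lower-triangular. Then for every k ≥ 1 there exists a unipotent upper-triangular matrix N_k with (N_k)_{ab} = δ_{ab} whenever a ≤ k or b ≤ k, such that B_k = B_{k−1} N_k and Y_{k+1} = Y_k · 𝛄(N_k). -/

import Mathlib

/-!
The map `gam` is multiplicative on unipotent upper-triangular matrices: `Sᵀ S` differs from the
identity only in the last diagonal entry, and the last row of `B - 1` vanishes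
(`gam_mul`). Hence, with `N = B_{k-1}⁻¹ B_k`, the identity
`Y_{k+1} = X · gam (B_{k-1} N) = Y_k · gam N` is immediate, and `N` is unipotent upper-triangular.

The vanishing pattern is proved by induction on `k`, starting from `N_0 = B_0`, on which the
condition is void. Cancelling `B_k` in `B_{k+1} C_{k+1} = B_k C_k gam N_k` gives
`N_{k+1} = C_k (gam N_k) C_{k+1}⁻¹`. If the first `k` rows of `N_k` are those of the identity, so
are the first `k + 1` rows of `gam N_k` (`gam_row`). As `C_k` is lower-triangular, the first `k + 1`
rows of `N_{k+1}` then agree with those of the lower-triangular matrix `C_k C_{k+1}⁻¹`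
(`next_row`). Since `N_{k+1}` is also unipotent upper-triangular, these rows, and with them the
first `k + 1` columns, are those of the identity.
-/

open Matrix

noncomputable section

/-- The lower shift matrix `S` (ones in positions `(i+1, i)`, zeros elsewhere). -/
def shiftS (n : ℕ) : Matrix (Fin n) (Fin n) ℂ :=
  Matrix.of fun i j => if (i:ℕ) = (j:ℕ) + 1 then 1 else 0

/-- `𝛄(B) = I + S (B - I) Sᵀ`. -/
def gam {n : ℕ} (B : Matrix (Fin n) (Fin n) ℂ) : Matrix (Fin n) (Fin n) ℂ :=
  1 + shiftS n * (B - 1) * (shiftS n)ᵀ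

/-- `B` is unipotent upper-triangular. -/
def UniUpper {n : ℕ} (B : Matrix (Fin n) (Fin n) ℂ) : Prop :=
  (∀ i j : Fin n, (j:ℕ) < (i:ℕ) → B i j = 0) ∧ (∀ i, B i i = 1)

/-- `C` is invertible lower-triangular. -/
def InvLower {n : ℕ} (C : Matrix (Fin n) (Fin n) ℂ) : Prop :=
  (∀ i j : Fin n, (i:ℕ) < (j:ℕ) → C i j = 0) ∧ IsUnit C.det

theorem UniUpper.blockTriangular {n : ℕ} {B : Matrix (Fin n) (Fin n) ℂ} (hB : UniUpper B) :
    B.BlockTriangular id := fun i j h => hB.1 i j h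

theorem UniUpper.isUnit_det {n : ℕ} {B : Matrix (Fin n) (Fin n) ℂ} (hB : UniUpper B) :
    IsUnit B.det := by
  rw [Matrix.det_of_isUpperTriangular hB.blockTriangular]
  simp [hB.2]

theorem UniUpper.inv_mul {n : ℕ} {A B : Matrix (Fin n) (Fin n) ℂ} (hA : UniUpper A)
    (hB : UniUpper B) : UniUpper (A⁻¹ * B) := by
  have := Matrix.invertibleOfIsUnitDet A hA.isUnit_det
  have hT : (A⁻¹ * B).BlockTriangular id :=
    (Matrix.blockTriangular_inv_of_blockTriangular hA.blockTriangular).mul hB.blockTriangular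
  refine ⟨fun i j h => hT h, fun i => ?_⟩
  -- The diagonal entry of `A * (A⁻¹ * B) = B` at `i` is the product of the diagonal entries.
  have h : (A * (A⁻¹ * B)) i i = 1 := by
    rw [Matrix.mul_nonsing_inv_cancel_left _ _ hA.isUnit_det, hB.2]
  rw [Matrix.mul_apply, Finset.sum_eq_single i, hA.2, one_mul] at h
  · exact h
  · intro j _ hj
    rcases lt_or_gt_of_ne hj with hlt | hgt
    · rw [hA.1 i j hlt, zero_mul]
    · rw [hT (show id i < id j from hgt), mul_zero]
  · simp

/-- `Sᵀ S` is the identity except for its last diagonal entry, which only sees the last row of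
`B - 1`; that row is zero. -/
theorem shift_mul_sub_one {n : ℕ} {B : Matrix (Fin n) (Fin n) ℂ} (hB : UniUpper B) :
    (shiftS n)ᵀ * (shiftS n * (B - 1)) = B - 1 := by
  ext i j
  rw [Matrix.mul_apply]
  by_cases hi : (i : ℕ) + 1 < n
  · rw [Finset.sum_eq_single (⟨i + 1, hi⟩ : Fin n), Matrix.mul_apply, Finset.sum_eq_single i]
    · simp [shiftS]
    · intro l _ hl
      have : (i : ℕ) ≠ l := fun h => hl (Fin.ext h.symm)
      simp [shiftS, this]
    · simp
    · intro l _ hl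
      have : (l : ℕ) ≠ i + 1 := fun h => hl (Fin.ext h)
      simp [shiftS, this]
    · simp
  · have hz : (B - 1) i j = 0 := by
      by_cases hij : i = j
      · subst hij
        simp [hB.2]
      · have : (i : ℕ) ≠ j := fun h => hij (Fin.ext h)
        rw [Matrix.sub_apply, Matrix.one_apply_ne hij, hB.1 i j (by omega), sub_zero]
    rw [hz]
    refine Finset.sum_eq_zero fun l _ => ?_
    have : (l : ℕ) ≠ i + 1 := by omega
    simp [shiftS, this]

theorem gam_mul {n : ℕ} (A : Matrix (Fin n) (Fin n) ℂ) {B : Matrix (Fin n) (Fin n) ℂ}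
    (hB : UniUpper B) : gam (A * B) = gam A * gam B := by
  have h : shiftS n * (A - 1) * (shiftS n)ᵀ * (shiftS n * (B - 1) * (shiftS n)ᵀ)
      = shiftS n * ((A - 1) * (B - 1)) * (shiftS n)ᵀ := by
    calc _ = shiftS n * (A - 1) * ((shiftS n)ᵀ * (shiftS n * (B - 1))) * (shiftS n)ᵀ := by
          simp only [Matrix.mul_assoc]
      _ = _ := by rw [shift_mul_sub_one hB]; simp only [Matrix.mul_assoc]
  have e : A * B - 1 = (A - 1) + (B - 1) + (A - 1) * (B - 1) := by noncomm_ring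
  unfold gam
  rw [e, add_mul 1, mul_add (shiftS n * (A - 1) * (shiftS n)ᵀ) 1, h]
  simp only [mul_add, add_mul, one_mul, mul_one]
  abel

/-- The map `gam` shifts the identity rows: one more row of `gam N` than of `N` is trivial. -/
theorem gam_row {n k : ℕ} {N : Matrix (Fin n) (Fin n) ℂ}
    (hN : ∀ a b : Fin n, (a : ℕ) < k → (N - 1) a b = 0) (a b : Fin n) (ha : (a : ℕ) < k + 1) :
    (gam N - 1) a b = 0 := by
  rw [gam, add_sub_cancel_left, Matrix.mul_assoc, Matrix.mul_apply]
  refine Finset.sum_eq_zero fun i _ => ?_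
  by_cases h : (a : ℕ) = i + 1
  · rw [Matrix.mul_apply, Finset.sum_eq_zero, mul_zero]
    intro j _
    rw [hN i j (by omega), zero_mul]
  · simp [shiftS, h]

/-- If the first `k` rows of `G` are those of the identity, then the first `k` rows of
`C * G * D⁻¹` vanish above the diagonal, for `C` and `D` lower-triangular. -/
theorem next_row {n k : ℕ} {C D G : Matrix (Fin n) (Fin n) ℂ} (hC : InvLower C) (hD : InvLower D)
    (hG : ∀ a b : Fin n, (a : ℕ) < k → (G - 1) a b = 0) (a b : Fin n) (ha : (a : ℕ) < k)
    (hab : a < b) : (C * G * D⁻¹) a b = 0 := by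
  have hrow : ∀ j, (C * (G - 1)) a j = 0 := fun j => by
    rw [Matrix.mul_apply]
    refine Finset.sum_eq_zero fun i _ => ?_
    rcases lt_or_ge (a : ℕ) (i : ℕ) with h | h
    · rw [hC.1 a i h, zero_mul]
    · rw [hG i j (by omega), mul_zero]
  have e : C * G * D⁻¹ = C * (G - 1) * D⁻¹ + C * D⁻¹ := by noncomm_ring
  have := Matrix.invertibleOfIsUnitDet D hD.2
  have hCt : C.BlockTriangular OrderDual.toDual := fun i j h => hC.1 i j h
  have hDt : D.BlockTriangular OrderDual.toDual := fun i j h => hD.1 i j h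
  have hlow := hCt.mul (Matrix.blockTriangular_inv_of_blockTriangular hDt)
  rw [e, Matrix.add_apply, hlow (show OrderDual.toDual b < OrderDual.toDual a from hab),
    Matrix.mul_apply]
  simp [hrow]

/-- under the hypotheses of the recursion, for every `k ≥ 1` there exists a
unipotent upper-triangular `N_k` with `(N_k)_{ab} = δ_{ab}` whenever `a ≤ k` or `b ≤ k`
(paper 1-based indices, i.e. 0-based `a < k` or `b < k`) such that `B_k = B_{k-1} N_k` and
`Y_{k+1} = Y_k ⬝ 𝛄(N_k)`. -/
theorem exists_Nk (n : ℕ) (hn : 2 ≤ n) (X : Matrix (Fin n) (Fin n) ℂ) (hX : IsUnit X.det)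
    (Y B C : ℕ → Matrix (Fin n) (Fin n) ℂ)
    (hY0 : Y 0 = X)
    (hfac : ∀ k, Y k = B k * C k)
    (hB : ∀ k, UniUpper (B k)) (hC : ∀ k, InvLower (C k))
    (hrec : ∀ k, Y (k+1) = X * gam (B k)) :
    ∀ k, 1 ≤ k → ∃ N : Matrix (Fin n) (Fin n) ℂ, UniUpper N ∧
      (∀ a b : Fin n, ((a:ℕ) < k ∨ (b:ℕ) < k) → N a b = if a = b then 1 else 0) ∧
      B k = B (k-1) * N ∧ Y (k+1) = Y k * gam N := by
  have hstep : ∀ k, Y (k + 2) = Y (k + 1) * gam ((B k)⁻¹ * B (k + 1)) := fun k => by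
    rw [hrec (k + 1), hrec k, Matrix.mul_assoc, ← gam_mul _ ((hB k).inv_mul (hB (k + 1))),
      Matrix.mul_nonsing_inv_cancel_left _ _ (hB k).isUnit_det]
  -- The shape of `N_{k+1}` for any matrix `N = N_k` satisfying the recursion and having `k`
  -- trivial rows.
  have hind : ∀ (k : ℕ) (N : Matrix (Fin n) (Fin n) ℂ), Y (k + 1) = Y k * gam N →
      (∀ a b : Fin n, (a : ℕ) < k → (N - 1) a b = 0) →
      ∀ a b : Fin n, (a : ℕ) < k + 1 → ((B k)⁻¹ * B (k + 1) - 1) a b = 0 := by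
    intro k N hYN hN a b ha
    have hU := (hB k).inv_mul (hB (k + 1))
    have e : (B k)⁻¹ * B (k + 1) = C k * gam N * (C (k + 1))⁻¹ := by
      have h1 : B (k + 1) * C (k + 1) = B k * (C k * gam N) := by
        rw [← hfac, hYN, hfac k, Matrix.mul_assoc]
      have h2 : B (k + 1) = B k * (C k * gam N) * (C (k + 1))⁻¹ := by
        rw [← h1, Matrix.mul_nonsing_inv_cancel_right _ _ (hC (k + 1)).2]
      rw [h2, Matrix.mul_assoc (B k), Matrix.nonsing_inv_mul_cancel_left _ _ (hB k).isUnit_det]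
    rw [Matrix.sub_apply]
    rcases lt_trichotomy a b with hab | hab | hab
    · rw [e, next_row (hC k) (hC (k + 1)) (gam_row hN) a b ha hab, Matrix.one_apply_ne hab.ne,
        sub_zero]
    · subst hab
      rw [hU.2, Matrix.one_apply_eq, sub_self]
    · rw [hU.1 a b hab, Matrix.one_apply_ne hab.ne', sub_zero]
  have hrows : ∀ k, ∀ a b : Fin n, (a : ℕ) < k + 1 → ((B k)⁻¹ * B (k + 1) - 1) a b = 0 := by
    intro k
    induction k with
    | zero => exact hind 0 (B 0) (by rw [hrec 0, hY0]) (fun a b h => absurd h (Nat.not_lt_zero _))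
    | succ k ih => exact hind (k + 1) _ (hstep k) ih
  intro k hk
  obtain ⟨k, rfl⟩ : ∃ m, k = m + 1 := ⟨k - 1, by omega⟩
  have hU := (hB k).inv_mul (hB (k + 1))
  refine ⟨(B k)⁻¹ * B (k + 1), hU, ?_, ?_, hstep k⟩
  · intro a b hab
    rw [← Matrix.one_apply]
    by_cases ha : (a : ℕ) < k + 1
    · exact sub_eq_zero.mp (hrows k a b ha)
    · -- Here `b < k + 1 ≤ a`, so the entry lies below the diagonal.
      have hba : (b : ℕ) < a := by omega
      rw [hU.1 a b hba, Matrix.one_apply_ne (Fin.ne_of_gt hba)]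
  · rw [Nat.add_sub_cancel, Matrix.mul_nonsing_inv_cancel_left _ _ (hB k).isUnit_det]

end
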